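/- For n = 2, define q(m,t) as follows: q = 1 - (m/t)² if 4/5 ≤ t ≤ 1 and m₁(t) ≤ m ≤ t²; q = (1-m)²/(1-t²) if 4/5 ≤ t < 1 and t² < m; q = 1 - ((m+1-t)/(2-t))² if 1 ≤ t < 2 and 5m > 2t+1; q = ((1-m)/(1-t/2))² otherwise (with m₁ as in the paper). Then for any probability measure μ on [0,1] with mean m and X₁, X₂ i.i.d. with law μ, one has P(X₁ + X₂ ≤ t) ≤ q(m,t), i.e., p(m,t) = q(m,t) for all 0 ≤ t < 2m, 0 < m < 1. -/

import Mathlib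

open MeasureTheory

/-- The boundary curve `m₁(t)` between the `{t/2,1}` and `{0,t}` solutions. -/
noncomputable def mOne (t : ℝ) : ℝ :=
  (4 * t ^ 2 - (2 - t) * t * Real.sqrt (t * (5 * t - 4))) / (5 * t ^ 2 - 4 * t + 4)

/-- The conjectured/proved value `q(m,t)` of `p(m,t)` for `n = 2`, from the solution
table of the paper. -/
noncomputable def qVal (m t : ℝ) : ℝ :=
  if 4 / 5 ≤ t ∧ t ≤ 1 ∧ mOne t ≤ m ∧ m ≤ t ^ 2 then 1 - (m / t) ^ 2
  else if 4 / 5 ≤ t ∧ t < 1 ∧ t ^ 2 < m then (1 - m) ^ 2 / (1 - t ^ 2)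
  else if 1 ≤ t ∧ t < 2 ∧ 2 * t + 1 < 5 * m then 1 - ((m + 1 - t) / (2 - t)) ^ 2
  else ((1 - m) / (1 - t / 2)) ^ 2

/-- `pSup2 m t = sup_{μ ∈ D_m} P_μ(X₁ + X₂ ≤ t)`. -/
noncomputable def pSup2 (m t : ℝ) : ENNReal :=
  ⨆ (μ : Measure ℝ) (_ : IsProbabilityMeasure μ ∧ μ (Set.Icc (0:ℝ) 1)ᶜ = 0 ∧
      (∫ x, x ∂μ) = m),
    (μ.prod μ) {p : ℝ × ℝ | p.1 + p.2 ≤ t}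

/-!
Write `c = t / 2` and `σ = P(X ≤ t)`. For `0 < s ≤ c`, put `A = P(X ≤ c - s)` and
`C = P(c + s ≤ X ≤ t)`. On `X₁ + X₂ ≤ t`, either both variables are below `c + s`, or one is at
least `c + s` and the other at most `c - s`, so that `P(X₁ + X₂ ≤ t) ≤ (σ - C)² + 2AC`. By the
layer-cake formula, the average of `C - A` over `0 < s ≤ min c (1 - c)` is bounded below in terms
of the mean; fixing an `s` at least as good as the average and maximising over `C` gives a bound
depending only on `σ`, `m` and `t`, which is maximised over `σ ≤ 1`. The extremal laws are
carried by `{0, t}`, `{0, t, 1}`, `{t - 1, 1}` and `{t / 2, 1}` in the four cases of `qVal`.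
-/

open Set

theorem exists_integral_le_mul_sub_measureReal_tails {α : Type*} [MeasurableSpace α]
    {ν : Measure α} [IsFiniteMeasure ν] {f : α → ℝ} (hf : Integrable f ν) {V : ℝ} (hV : 0 < V)
    (hfV : ∀ᵐ x ∂ν, f x ≤ V) :
    ∃ s ∈ Ioc 0 V, ∫ x, f x ∂ν ≤ V * (ν.real {x | s ≤ f x} - ν.real {x | f x ≤ -s}) := by
  have hpos_int : Integrable (fun x ↦ max (f x) 0) ν := hf.pos_part
  have hneg_int : Integrable (fun x ↦ min (max (-f x) 0) V) ν :=
    hf.neg_part.inf (integrable_const V)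
  have hpos : ∫ x, max (f x) 0 ∂ν = ∫ s in Ioc 0 V, ν.real {x | s ≤ f x} := by
    rw [hpos_int.integral_eq_integral_Ioc_meas_le (.of_forall fun x ↦ le_max_right _ _)
      (hfV.mono fun x hx ↦ max_le hx hV.le)]
    refine setIntegral_congr_fun measurableSet_Ioc fun s hs ↦ ?_
    simp only [le_max_iff, not_le.2 hs.1, or_false]
  have hneg : ∫ x, min (max (-f x) 0) V ∂ν = ∫ s in Ioc 0 V, ν.real {x | f x ≤ -s} := by
    rw [hneg_int.integral_eq_integral_Ioc_meas_le
      (.of_forall fun x ↦ le_min (le_max_right _ _) hV.le) (.of_forall fun x ↦ min_le_right _ _)]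
    refine setIntegral_congr_fun measurableSet_Ioc fun s hs ↦ ?_
    simp only [le_min_iff, le_max_iff, not_le.2 hs.1, hs.2, or_false, and_true, le_neg]
  have hupper_int : IntegrableOn (fun s ↦ ν.real {x | s ≤ f x}) (Ioc 0 V) := by
    have hanti : Antitone fun s ↦ ν.real {x | s ≤ f x} :=
      fun a b hab ↦ measureReal_mono fun x hx ↦ hab.trans hx
    exact (intervalIntegrable_iff_integrableOn_Ioc_of_le hV.le).1 hanti.intervalIntegrable
  have hlower_int : IntegrableOn (fun s ↦ ν.real {x | f x ≤ -s}) (Ioc 0 V) := by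
    have hanti : Antitone fun s ↦ ν.real {x | f x ≤ -s} :=
      fun a b hab ↦ measureReal_mono fun x hx ↦ le_trans hx (neg_le_neg hab)
    exact (intervalIntegrable_iff_integrableOn_Ioc_of_le hV.le).1 hanti.intervalIntegrable
  obtain ⟨s, hs, havg⟩ := exists_setAverage_le (μ := volume) (by simpa using hV) (by simp)
    (hupper_int.sub hlower_int)
  refine ⟨s, hs, ?_⟩
  rw [setAverage_eq, Real.volume_real_Ioc_of_le hV.le, sub_zero, smul_eq_mul,
    inv_mul_le_iff₀ hV] at havg
  calc ∫ x, f x ∂ν ≤ ∫ x, (max (f x) 0 - min (max (-f x) 0) V) ∂ν := by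
        refine integral_mono hf (hpos_int.sub hneg_int) fun x ↦ ?_
        change f x ≤ max (f x) 0 - min (max (-f x) 0) V
        linarith [min_le_left (max (-f x) 0) V, max_zero_sub_max_neg_zero_eq_self (f x)]
    _ = ∫ s in Ioc 0 V, (ν.real {x | s ≤ f x} - ν.real {x | f x ≤ -s}) := by
        rw [integral_sub hpos_int hneg_int, hpos, hneg, integral_sub hupper_int hlower_int]
    _ ≤ _ := havg

theorem sub_mul_measureReal_sub_le_setIntegral_sub {α : Type*} [MeasurableSpace α]
    {μ : Measure α} [IsProbabilityMeasure μ] {f : α → ℝ} (hf : Integrable f μ) {b : ℝ}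
    (hfb : ∀ᵐ x ∂μ, f x ≤ b) (s : Set α) (c : ℝ) :
    (b - c) * μ.real s - (b - ∫ x, f x ∂μ) ≤ ∫ x in s, (f x - c) ∂μ := by
  have hle : ∫ x in s, (b - f x) ∂μ ≤ ∫ x, (b - f x) ∂μ :=
    setIntegral_le_integral ((integrable_const b).sub hf) (hfb.mono fun x hx ↦ sub_nonneg.2 hx)
  rw [integral_sub (integrable_const b) hf,
    integral_sub (integrable_const b) hf.integrableOn] at hle
  rw [integral_sub hf.integrableOn (integrable_const c)]
  simp only [integral_const, measureReal_restrict_apply_univ, probReal_univ, smul_eq_mul,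
    one_mul] at hle ⊢
  linarith

theorem measureReal_le_le_div_of_ae_le {α : Type*} [MeasurableSpace α]
    {μ : Measure α} [IsProbabilityMeasure μ] {f : α → ℝ} (hf : Integrable f μ) {b : ℝ}
    (hfb : ∀ᵐ x ∂μ, f x ≤ b) {c : ℝ} (hc : c < b) :
    μ.real {x | f x ≤ c} ≤ (b - ∫ x, f x ∂μ) / (b - c) := by
  have hmarkov := mul_meas_ge_le_integral_of_nonneg (hfb.mono fun x hx ↦ sub_nonneg.2 hx)
    ((integrable_const b).sub hf) (b - c)
  rw [integral_sub (integrable_const b) hf, integral_const, probReal_univ, one_smul] at hmarkov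
  rw [le_div_iff₀' (sub_pos.2 hc)]
  simpa only [sub_le_sub_iff_left] using hmarkov

theorem measureReal_prod_add_le_two_mul_le (μ : Measure ℝ) [IsFiniteMeasure μ]
    (hμ : ∀ᵐ x ∂μ, 0 ≤ x) (c s : ℝ) :
    (μ.prod μ).real {p : ℝ × ℝ | p.1 + p.2 ≤ 2 * c} ≤
      μ.real (Iio (c + s)) ^ 2 + 2 * μ.real (Iic (c - s)) * μ.real (Icc (c + s) (2 * c)) := by
  have hcover : {p : ℝ × ℝ | p.1 + p.2 ≤ 2 * c} ≤ᵐ[μ.prod μ]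
      (Iio (c + s) ×ˢ Iio (c + s) ∪ (Iic (c - s) ×ˢ Icc (c + s) (2 * c) ∪
        Icc (c + s) (2 * c) ×ˢ Iic (c - s)) : Set (ℝ × ℝ)) := by
    filter_upwards [Measure.quasiMeasurePreserving_fst.ae hμ,
      Measure.quasiMeasurePreserving_snd.ae hμ] with ⟨x, y⟩ (hx : 0 ≤ x) (hy : 0 ≤ y)
      (hxy : x + y ≤ 2 * c)
    rcases lt_or_ge x (c + s) with hxs | hxs
    · rcases lt_or_ge y (c + s) with hys | hys
      · exact .inl ⟨hxs, hys⟩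
      · exact .inr (.inl ⟨(by linarith : x ≤ c - s), hys, by linarith⟩)
    · exact .inr (.inr ⟨⟨hxs, by linarith⟩, (by linarith : y ≤ c - s)⟩)
  calc (μ.prod μ).real {p : ℝ × ℝ | p.1 + p.2 ≤ 2 * c}
      ≤ _ := ENNReal.toReal_mono (by finiteness) (measure_mono_ae hcover)
    _ ≤ _ := (measureReal_union_le _ _).trans (add_le_add_right (measureReal_union_le _ _) _)
    _ = _ := by simp only [measureReal_prod_prod]; ring

theorem sub_sq_add_le_max {A C σ d : ℝ} (hA : 0 ≤ A) (hC : 0 ≤ C) (hσ : A + C ≤ σ)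
    (hd : d ≤ C - A) (hd0 : 0 ≤ d) :
    (σ - C) ^ 2 + 2 * A * C ≤ max ((σ - d) ^ 2) (σ ^ 2 - ((σ + d) / 2) ^ 2) := by
  set e := (σ + d) / 2 with he
  rcases le_or_gt e C with heC | hCe
  · refine le_max_of_le_right ?_
    have hAC : A * C ≤ (σ - C) * C := by gcongr; linarith
    have hsq : e ^ 2 ≤ C ^ 2 := by gcongr; linarith
    linarith
  -- At `A = C - d` the left side is `σ ^ 2 - e ^ 2 + (C - e) * (3 * C - e)`,
  -- hence the split at `C = e / 3`.
  · have hAC : A * C ≤ (C - d) * C := by gcongr; linarith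
    rcases le_or_gt e (3 * C) with he3 | he3
    · refine le_max_of_le_right ?_
      have hprod : 0 ≤ (e - C) * (3 * C - e) :=
        mul_nonneg (sub_nonneg.2 hCe.le) (sub_nonneg.2 he3)
      linear_combination 2 * hAC + hprod + 2 * C * he
    · refine le_max_of_le_left ?_
      have hprod : 0 ≤ (C - d) * (2 * σ - 3 * C - d) :=
        mul_nonneg (by linarith) (by linarith)
      linear_combination 2 * hAC + hprod

section UpperBound

variable {μ : Measure ℝ} [IsProbabilityMeasure μ]

theorem integrable_id_of_ae_mem_Icc (hμ : ∀ᵐ x ∂μ, x ∈ Icc (0 : ℝ) 1) :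
    Integrable (fun x ↦ x) μ :=
  .of_mem_Icc 0 1 aemeasurable_id hμ

theorem exists_sub_le_mul_measureReal_Icc_sub_Iic (hμ : ∀ᵐ x ∂μ, x ∈ Icc (0 : ℝ) 1) {c : ℝ}
    (hc0 : 0 < c) (hc1 : c < 1) :
    ∃ s ∈ Ioc 0 c, (1 - c) * μ.real (Iic (2 * c)) - (1 - ∫ x, x ∂μ) ≤
      min c (1 - c) * (μ.real (Icc (c + s) (2 * c)) - μ.real (Iic (c - s))) := by
  have hV : 0 < min c (1 - c) := lt_min hc0 (sub_pos.2 hc1)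
  have hbound : ∀ᵐ x ∂μ.restrict (Iic (2 * c)), x - c ≤ min c (1 - c) := by
    filter_upwards [ae_restrict_of_ae hμ, ae_restrict_mem measurableSet_Iic]
      with x hx (hx' : x ≤ 2 * c)
    exact le_min (by linarith) (by linarith [hx.2])
  have hint : Integrable (fun x ↦ x - c) (μ.restrict (Iic (2 * c))) :=
    ((integrable_id_of_ae_mem_Icc hμ).sub (integrable_const c)).integrableOn
  obtain ⟨s, hs, hle⟩ := exists_integral_le_mul_sub_measureReal_tails hint hV hbound
  refine ⟨s, ⟨hs.1, hs.2.trans (min_le_left _ _)⟩,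
    (sub_mul_measureReal_sub_le_setIntegral_sub (integrable_id_of_ae_mem_Icc hμ)
      (hμ.mono fun x hx ↦ hx.2) _ c).trans (hle.trans_eq ?_)⟩
  have hupper : {x | s ≤ x - c} ∩ Iic (2 * c) = Icc (c + s) (2 * c) := by
    ext x; simp [le_sub_iff_add_le']
  have hlower : {x | x - c ≤ -s} ∩ Iic (2 * c) = Iic (c - s) := by
    ext x
    simp only [mem_inter_iff, mem_ofPred_eq, mem_Iic]
    exact ⟨fun h ↦ by linarith [h.1], fun h ↦ ⟨by linarith, by linarith [hs.1]⟩⟩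
  rw [measureReal_restrict_apply' measurableSet_Iic, hupper,
    measureReal_restrict_apply' measurableSet_Iic, hlower]

theorem exists_measureReal_prod_add_le_le (hμ : ∀ᵐ x ∂μ, x ∈ Icc (0 : ℝ) 1) {t : ℝ}
    (ht0 : 0 < t) (ht2 : t < 2) :
    ∃ A C, 0 ≤ A ∧ 0 ≤ C ∧ A + C ≤ μ.real (Iic t) ∧
      (1 - t / 2) * μ.real (Iic t) - (1 - ∫ x, x ∂μ) ≤ min (t / 2) (1 - t / 2) * (C - A) ∧
      (μ.prod μ).real {p : ℝ × ℝ | p.1 + p.2 ≤ t} ≤ (μ.real (Iic t) - C) ^ 2 + 2 * A * C := by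
  obtain ⟨s, hs, hle⟩ := exists_sub_le_mul_measureReal_Icc_sub_Iic hμ (half_pos ht0)
    (show t / 2 < 1 by linarith)
  have hprod := measureReal_prod_add_le_two_mul_le μ (hμ.mono fun x hx ↦ hx.1) (t / 2) s
  rw [mul_div_cancel₀ t two_ne_zero] at hle hprod
  have hsplit : μ.real (Iio (t / 2 + s)) + μ.real (Icc (t / 2 + s) t) = μ.real (Iic t) := by
    rw [← measureReal_union _ measurableSet_Icc, Iio_union_Icc_eq_Iic (by linarith [hs.2])]
    exact disjoint_left.2 fun x hx hx' ↦ hx'.1.not_gt hx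
  have hmono : μ.real (Iic (t / 2 - s)) ≤ μ.real (Iio (t / 2 + s)) :=
    measureReal_mono (Iic_subset_Iio.2 (by linarith [hs.1]))
  refine ⟨_, _, measureReal_nonneg, measureReal_nonneg, by linarith, hle, ?_⟩
  rwa [eq_sub_of_add_eq hsplit] at hprod

theorem measureReal_prod_add_le_le_of_one_le (hμ : ∀ᵐ x ∂μ, x ∈ Icc (0 : ℝ) 1) {m t : ℝ}
    (hm : ∫ x, x ∂μ = m) (ht1 : 1 ≤ t) (htm : t ≤ 2 * m) (ht2 : t < 2) :
    (μ.prod μ).real {p : ℝ × ℝ | p.1 + p.2 ≤ t} ≤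
      max (((1 - m) / (1 - t / 2)) ^ 2) (1 - ((m + 1 - t) / (2 - t)) ^ 2) := by
  obtain ⟨A, C, hA, hC, hAC, hdrift, hle⟩ :=
    exists_measureReal_prod_add_le_le hμ (by linarith) ht2
  have hone : μ.real (Iic t) = 1 := by
    rw [measureReal_def, prob_compl_eq_zero_iff measurableSet_Iic |>.1, ENNReal.toReal_one]
    exact hμ.mono fun x hx ↦ hx.2.trans ht1
  have hw : 0 < 1 - t / 2 := by linarith
  have hw' : 0 < 2 - t := by linarith
  rw [hone, hm, min_eq_right (by linarith)] at hdrift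
  rw [hone] at hAC hle
  have hd : (m - t / 2) / (1 - t / 2) ≤ C - A := by rw [div_le_iff₀' hw]; linarith
  have hmax := sub_sq_add_le_max hA hC hAC hd (div_nonneg (by linarith) hw.le)
  have hlow : 1 - (m - t / 2) / (1 - t / 2) = (1 - m) / (1 - t / 2) := by field_simp; ring
  have hhigh : (1 + (m - t / 2) / (1 - t / 2)) / 2 = (m + 1 - t) / (2 - t) := by
    field_simp; ring
  rw [hlow, hhigh, one_pow] at hmax
  exact hle.trans hmax

theorem measureReal_prod_add_le_le_of_le_one (hμ : ∀ᵐ x ∂μ, x ∈ Icc (0 : ℝ) 1) {m t : ℝ}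
    (hm : ∫ x, x ∂μ = m) (ht0 : 0 < t) (ht1 : t ≤ 1) :
    (μ.prod μ).real {p : ℝ × ℝ | p.1 + p.2 ≤ t} ≤ max (((1 - m) / (1 - t / 2)) ^ 2)
      (μ.real (Iic t) ^ 2 - ((μ.real (Iic t) - (1 - m)) / t) ^ 2) := by
  obtain ⟨A, C, hA, hC, hAC, hdrift, hle⟩ :=
    exists_measureReal_prod_add_le_le hμ ht0 (by linarith)
  set σ := μ.real (Iic t)
  have hw : 0 < 1 - t / 2 := by linarith
  have hw' : 0 < 2 - t := by linarith
  rw [hm, min_eq_left (by linarith)] at hdrift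
  rcases lt_or_ge ((1 - t / 2) * σ) (1 - m) with hσ | hσ
  · refine le_max_of_le_left (hle.trans ?_)
    have hle' : σ ≤ (1 - m) / (1 - t / 2) := (le_div_iff₀' hw).2 hσ.le
    have hAC' : A * C ≤ (σ - C) * C := by gcongr; linarith
    calc (σ - C) ^ 2 + 2 * A * C ≤ σ ^ 2 := by linarith [sq_nonneg C]
      _ ≤ ((1 - m) / (1 - t / 2)) ^ 2 := by gcongr
  · set d := ((1 - t / 2) * σ - (1 - m)) / (t / 2) with hd
    have hdAC : d ≤ C - A := by rw [hd, div_le_iff₀' (by linarith)]; exact hdrift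
    have hmax := sub_sq_add_le_max hA hC hAC hdAC (div_nonneg (by linarith) (by linarith))
    have hlow : σ - d ≤ (1 - m) / (1 - t / 2) := by
      rw [← sub_nonneg]
      have hgap : (1 - m) / (1 - t / 2) - (σ - d) =
          ((1 - t / 2) * σ - (1 - m)) * (1 - t) / (t / 2 * (1 - t / 2)) := by
        rw [hd]; field_simp; ring
      rw [hgap]
      exact div_nonneg (mul_nonneg (sub_nonneg.2 hσ) (sub_nonneg.2 ht1)) (by positivity)
    have hhigh : (σ + d) / 2 = (σ - (1 - m)) / t := by rw [hd]; field_simp; ring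
    rw [hhigh] at hmax
    exact hle.trans (hmax.trans (max_le_max_right _ (pow_le_pow_left₀ (by linarith) hlow 2)))

theorem measureReal_prod_add_le_zero_le (hμ : ∀ᵐ x ∂μ, x ∈ Icc (0 : ℝ) 1) {m : ℝ}
    (hm : ∫ x, x ∂μ = m) :
    (μ.prod μ).real {p : ℝ × ℝ | p.1 + p.2 ≤ 0} ≤ (1 - m) ^ 2 := by
  have hsub : {p : ℝ × ℝ | p.1 + p.2 ≤ 0} ≤ᵐ[μ.prod μ] Iic 0 ×ˢ Iic 0 := by
    filter_upwards [Measure.quasiMeasurePreserving_fst.ae hμ,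
      Measure.quasiMeasurePreserving_snd.ae hμ] with p hx hy (hxy : p.1 + p.2 ≤ 0)
    exact ⟨(by linarith [hy.1] : p.1 ≤ 0), (by linarith [hx.1] : p.2 ≤ 0)⟩
  have hIic : μ.real (Iic 0) ≤ 1 - m := by
    simpa only [hm, sub_zero, div_one, Iic_def] using measureReal_le_le_div_of_ae_le
      (integrable_id_of_ae_mem_Icc hμ) (hμ.mono fun x hx ↦ hx.2) zero_lt_one
  calc (μ.prod μ).real {p : ℝ × ℝ | p.1 + p.2 ≤ 0}
      ≤ (μ.prod μ).real (Iic 0 ×ˢ Iic 0) := ENNReal.toReal_mono (by finiteness)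
        (measure_mono_ae hsub)
    _ = μ.real (Iic 0) ^ 2 := by rw [measureReal_prod_prod, sq]
    _ ≤ (1 - m) ^ 2 := by gcongr

end UpperBound

theorem div_sq_le_div_one_sub_sq (r : ℝ) {t : ℝ} (h45 : 4 / 5 ≤ t) (ht1 : t < 1) :
    (r / (1 - t / 2)) ^ 2 ≤ r ^ 2 / (1 - t ^ 2) := by
  rw [div_pow]
  have : 0 < 1 - t ^ 2 := by nlinarith
  gcongr
  nlinarith

theorem div_one_sub_sq_le_div_sq (r : ℝ) {t : ℝ} (h0 : 0 ≤ t) (h45 : t ≤ 4 / 5) :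
    r ^ 2 / (1 - t ^ 2) ≤ (r / (1 - t / 2)) ^ 2 := by
  rw [div_pow]
  have : 0 < 1 - t / 2 := by linarith
  gcongr
  nlinarith

theorem sq_sub_div_sq_le_div (r σ : ℝ) {t : ℝ} (h0 : 0 < t) (h1 : t < 1) :
    σ ^ 2 - ((σ - r) / t) ^ 2 ≤ r ^ 2 / (1 - t ^ 2) := by
  have hpos : 0 < 1 - t ^ 2 := by nlinarith
  have hgap : r ^ 2 / (1 - t ^ 2) - (σ ^ 2 - ((σ - r) / t) ^ 2) =
      (σ * (1 - t ^ 2) - r) ^ 2 / (t ^ 2 * (1 - t ^ 2)) := by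
    field_simp; ring
  rw [← sub_nonneg, hgap]
  positivity

theorem sq_sub_div_sq_le_one_sub {m t σ : ℝ} (h0 : 0 < t) (h1 : t ≤ 1) (hm : m ≤ t ^ 2)
    (hσ : σ ≤ 1) : σ ^ 2 - ((σ - (1 - m)) / t) ^ 2 ≤ 1 - (m / t) ^ 2 := by
  have hgap : 1 - (m / t) ^ 2 - (σ ^ 2 - ((σ - (1 - m)) / t) ^ 2) =
      (1 - σ) * (2 * (t ^ 2 - m) + (1 - σ) * (1 - t ^ 2)) / t ^ 2 := by
    field_simp; ring
  have ht : 0 ≤ 1 - t ^ 2 := by nlinarith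
  rw [← sub_nonneg] at hσ hm ⊢
  rw [hgap]
  positivity

/-- The larger root `m` of `((1 - m) / (1 - t / 2)) ^ 2 = 1 - (m / t) ^ 2`, whose smaller root is
the paper's `m₁(t)`. -/
noncomputable def mOneConj (t : ℝ) : ℝ :=
  (4 * t ^ 2 + (2 - t) * t * √(t * (5 * t - 4))) / (5 * t ^ 2 - 4 * t + 4)

theorem div_sq_sub_one_sub_div_sq (m : ℝ) {t : ℝ} (h45 : 4 / 5 ≤ t) (ht2 : t ≠ 2) :
    ((1 - m) / (1 - t / 2)) ^ 2 - (1 - (m / t) ^ 2) =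
      (5 * t ^ 2 - 4 * t + 4) / (t * (2 - t)) ^ 2 * ((m - mOne t) * (m - mOneConj t)) := by
  have hsq : √(t * (5 * t - 4)) ^ 2 = t * (5 * t - 4) :=
    Real.sq_sqrt (mul_nonneg (by linarith) (by linarith))
  have ht : t ≠ 0 := by linarith
  have htw : 2 - t ≠ 0 := sub_ne_zero.2 ht2.symm
  have hhalf : 1 - t / 2 = (2 - t) / 2 := by ring
  rw [mOne, mOneConj, hhalf]
  generalize √(t * (5 * t - 4)) = w at hsq ⊢
  generalize hK : 5 * t ^ 2 - 4 * t + 4 = K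
  have hK0 : K ≠ 0 := by nlinarith
  have hroots : (m - (4 * t ^ 2 - (2 - t) * t * w) / K) *
        (m - (4 * t ^ 2 + (2 - t) * t * w) / K) =
      ((K * m - 4 * t ^ 2) ^ 2 - ((2 - t) * t) ^ 2 * (t * (5 * t - 4))) / K ^ 2 := by
    field_simp
    linear_combination -((2 - t) * t) ^ 2 * hsq
  rw [hroots]
  field_simp
  subst hK
  ring

theorem sq_le_mOneConj {t : ℝ} (h45 : 4 / 5 ≤ t) (ht1 : t ≤ 1) : t ^ 2 ≤ mOneConj t := by
  have hsq : √(t * (5 * t - 4)) ^ 2 = t * (5 * t - 4) :=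
    Real.sq_sqrt (mul_nonneg (by linarith) (by linarith))
  set w := √(t * (5 * t - 4))
  have hw0 : 0 ≤ w := Real.sqrt_nonneg _
  have hw1 : w ≤ 1 := Real.sqrt_le_one.2 (by nlinarith)
  have hwt : w * t ≤ 2 - t := by nlinarith
  rw [mOneConj, le_div_iff₀ (by nlinarith)]
  have hslack : 0 ≤ t * w * (2 - t - w * t) :=
    mul_nonneg (mul_nonneg (by linarith) hw0) (sub_nonneg.2 hwt)
  linear_combination hslack - t ^ 2 * hsq

theorem div_sq_le_one_sub_div_sq {m t : ℝ} (h45 : 4 / 5 ≤ t) (ht1 : t ≤ 1) (hm : m ≤ t ^ 2)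
    (hm₁ : mOne t ≤ m) : ((1 - m) / (1 - t / 2)) ^ 2 ≤ 1 - (m / t) ^ 2 := by
  have hK : 0 ≤ 5 * t ^ 2 - 4 * t + 4 := by nlinarith
  rw [← sub_nonpos, div_sq_sub_one_sub_div_sq m h45 (by linarith)]
  exact mul_nonpos_of_nonneg_of_nonpos (by positivity) (mul_nonpos_of_nonneg_of_nonpos
    (sub_nonneg.2 hm₁) (sub_nonpos.2 (hm.trans (sq_le_mOneConj h45 ht1))))

theorem one_sub_div_sq_le_div_sq {m t : ℝ} (h45 : 4 / 5 ≤ t) (ht1 : t ≤ 1) (hm : m ≤ t ^ 2)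
    (hm₁ : m ≤ mOne t) : 1 - (m / t) ^ 2 ≤ ((1 - m) / (1 - t / 2)) ^ 2 := by
  have hK : 0 ≤ 5 * t ^ 2 - 4 * t + 4 := by nlinarith
  rw [← sub_nonneg, div_sq_sub_one_sub_div_sq m h45 (by linarith)]
  exact mul_nonneg (by positivity) (mul_nonneg_of_nonpos_of_nonpos
    (sub_nonpos.2 hm₁) (sub_nonpos.2 (hm.trans (sq_le_mOneConj h45 ht1))))

theorem one_sub_sq_sub_div_sq (m : ℝ) {t : ℝ} (ht : t ≠ 2) :
    1 - ((m + 1 - t) / (2 - t)) ^ 2 - ((1 - m) / (1 - t / 2)) ^ 2 =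
      (1 - m) * (5 * m - (2 * t + 1)) / (2 - t) ^ 2 := by
  have htw : 2 - t ≠ 0 := sub_ne_zero.2 ht.symm
  have hhalf : 1 - t / 2 = (2 - t) / 2 := by ring
  rw [hhalf]
  field_simp
  ring

theorem div_sq_le_qVal {m : ℝ} (hm1 : m ≤ 1) (t : ℝ) :
    ((1 - m) / (1 - t / 2)) ^ 2 ≤ qVal m t := by
  unfold qVal
  split_ifs with h₁ h₂ h₃
  · exact div_sq_le_one_sub_div_sq h₁.1 h₁.2.1 h₁.2.2.2 h₁.2.2.1
  · exact div_sq_le_div_one_sub_sq _ h₂.1 h₂.2.1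
  · rw [← sub_nonneg, one_sub_sq_sub_div_sq m h₃.2.1.ne]
    exact div_nonneg (mul_nonneg (sub_nonneg.2 hm1) (sub_nonneg.2 h₃.2.2.le)) (sq_nonneg _)
  · exact le_rfl

theorem one_sub_sq_le_qVal {m t : ℝ} (hm1 : m ≤ 1) (ht1 : 1 ≤ t) (ht2 : t < 2) :
    1 - ((m + 1 - t) / (2 - t)) ^ 2 ≤ qVal m t := by
  unfold qVal
  split_ifs with h₁ h₂ h₃
  · obtain rfl : t = 1 := le_antisymm h₁.2.1 ht1
    norm_num
  · exact absurd h₂.2.1 ht1.not_gt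
  · exact le_rfl
  · have hm : 5 * m ≤ 2 * t + 1 := not_lt.1 fun h ↦ h₃ ⟨ht1, ht2, h⟩
    rw [← sub_nonpos, one_sub_sq_sub_div_sq m ht2.ne]
    exact div_nonpos_of_nonpos_of_nonneg (mul_nonpos_of_nonneg_of_nonpos (sub_nonneg.2 hm1)
      (sub_nonpos.2 hm)) (sq_nonneg _)

theorem sq_sub_div_sq_le_qVal (m : ℝ) {t σ : ℝ} (ht0 : 0 < t) (ht1 : t < 1) (hσ : σ ≤ 1) :
    σ ^ 2 - ((σ - (1 - m)) / t) ^ 2 ≤ qVal m t := by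
  unfold qVal
  split_ifs with h₁ h₂ h₃
  · exact sq_sub_div_sq_le_one_sub ht0 ht1.le h₁.2.2.2 hσ
  · exact sq_sub_div_sq_le_div _ σ ht0 ht1
  · exact absurd h₃.1 ht1.not_ge
  · rcases le_total t (4 / 5) with h45 | h45
    · exact (sq_sub_div_sq_le_div _ σ ht0 ht1).trans (div_one_sub_sq_le_div_sq _ ht0.le h45)
    · have hm : m ≤ t ^ 2 := not_lt.1 fun h ↦ h₂ ⟨h45, ht1, h⟩
      have hm₁ : m ≤ mOne t := le_of_not_ge fun h ↦ h₁ ⟨h45, ht1.le, h, hm⟩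
      exact (sq_sub_div_sq_le_one_sub ht0 ht1.le hm hσ).trans
        (one_sub_div_sq_le_div_sq h45 ht1.le hm hm₁)

theorem measureReal_prod_add_le_le_qVal {μ : Measure ℝ} [IsProbabilityMeasure μ]
    (hμ : ∀ᵐ x ∂μ, x ∈ Icc (0 : ℝ) 1) {m t : ℝ} (hm : ∫ x, x ∂μ = m) (hm1 : m < 1)
    (ht0 : 0 ≤ t) (htm : t ≤ 2 * m) :
    (μ.prod μ).real {p : ℝ × ℝ | p.1 + p.2 ≤ t} ≤ qVal m t := by
  rcases ht0.eq_or_lt with rfl | ht0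
  · exact (measureReal_prod_add_le_zero_le hμ hm).trans (by simpa using div_sq_le_qVal hm1.le 0)
  rcases lt_or_ge t 1 with ht1 | ht1
  · exact (measureReal_prod_add_le_le_of_le_one hμ hm ht0 ht1.le).trans
      (max_le (div_sq_le_qVal hm1.le t) (sq_sub_div_sq_le_qVal m ht0 ht1 measureReal_le_one))
  · have ht2 : t < 2 := by linarith
    exact (measureReal_prod_add_le_le_of_one_le hμ hm ht1 htm ht2).trans
      (max_le (div_sq_le_qVal hm1.le t) (one_sub_sq_le_qVal hm1.le ht1 ht2))

/-- The discrete measure with mass `w i` at the point `x i`; used for the extremal laws. -/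
noncomputable def atomic {ι : Type*} [Fintype ι] (w x : ι → ℝ) : Measure ℝ :=
  ∑ i, ENNReal.ofReal (w i) • Measure.dirac (x i)

section atomic

variable {ι : Type*} [Fintype ι] {w x : ι → ℝ}

instance isFiniteMeasure_atomic : IsFiniteMeasure (atomic w x) := by
  constructor
  simp [atomic, Measure.finsetSum_apply]

theorem isProbabilityMeasure_atomic (hw : w ∈ stdSimplex ℝ ι) :
    IsProbabilityMeasure (atomic w x) := by
  constructor
  simp only [atomic, Measure.finsetSum_apply, Measure.smul_apply, measure_univ, smul_eq_mul,
    mul_one]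
  rw [← ENNReal.ofReal_sum_of_nonneg fun i _ ↦ hw.1 i, hw.2, ENNReal.ofReal_one]

theorem atomic_compl_eq_zero {s : Set ℝ} (hs : MeasurableSet s) (hx : ∀ i, x i ∈ s) :
    atomic w x sᶜ = 0 := by
  simp [atomic, Measure.finsetSum_apply, Measure.dirac_apply' _ hs.compl, hx]

theorem integral_atomic (hw : ∀ i, 0 ≤ w i) (f : ℝ → ℝ) :
    ∫ y, f y ∂atomic w x = ∑ i, w i * f (x i) := by
  rw [atomic, integral_finsetSum_measure fun i _ ↦
    (integrable_dirac (by finiteness)).smul_measure ENNReal.ofReal_ne_top]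
  simp [integral_smul_measure, ENNReal.toReal_ofReal (hw _)]

theorem measureReal_prod_atomic (hw : ∀ i, 0 ≤ w i) {s : Set (ℝ × ℝ)}
    (hs : MeasurableSet s) :
    ((atomic w x).prod (atomic w x)).real s =
      ∑ p : ι × ι, w p.1 * w p.2 * s.indicator 1 (x p.1, x p.2) := by
  rw [← integral_indicator_one hs, integral_prod _ ((integrable_const 1).indicator hs),
    integral_atomic hw, Fintype.sum_prod_type]
  simp only [integral_atomic hw fun y ↦ s.indicator 1 (_, y), Finset.mul_sum, mul_assoc]

theorem ofReal_sum_le_pSup2 (hw : w ∈ stdSimplex ℝ ι) (hx : ∀ i, x i ∈ Icc (0 : ℝ) 1) {m t : ℝ}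
    (hm : ∑ i, w i * x i = m) {S : Finset (ι × ι)} (hS : ∀ p ∈ S, x p.1 + x p.2 ≤ t) :
    ENNReal.ofReal (∑ p ∈ S, w p.1 * w p.2) ≤ pSup2 m t := by
  have hprob := isProbabilityMeasure_atomic (x := x) hw
  have hmeas : MeasurableSet {p : ℝ × ℝ | p.1 + p.2 ≤ t} :=
    measurableSet_le (by fun_prop) (by fun_prop)
  refine le_iSup₂_of_le (atomic w x) ⟨hprob, atomic_compl_eq_zero measurableSet_Icc hx,
    (integral_atomic hw.1 _).trans hm⟩ ?_
  rw [← ofReal_measureReal, measureReal_prod_atomic hw.1 hmeas]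
  refine ENNReal.ofReal_le_ofReal ?_
  calc ∑ p ∈ S, w p.1 * w p.2
      = ∑ p ∈ S, w p.1 * w p.2 *
          {q : ℝ × ℝ | q.1 + q.2 ≤ t}.indicator 1 (x p.1, x p.2) :=
        Finset.sum_congr rfl fun p hp ↦ by
          have hmem : (x p.1, x p.2) ∈ {q : ℝ × ℝ | q.1 + q.2 ≤ t} := hS p hp
          rw [indicator_of_mem hmem, Pi.one_apply, mul_one]
    _ ≤ _ := Finset.sum_le_univ_sum_of_nonneg fun p ↦
        mul_nonneg (mul_nonneg (hw.1 _) (hw.1 _)) (indicator_nonneg (fun _ _ ↦ zero_le_one) _)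

end atomic

theorem ofReal_one_sub_sq_le_pSup2 {p x y t : ℝ} (hp : p ∈ Icc (0 : ℝ) 1)
    (hx : x ∈ Icc (0 : ℝ) 1) (hy : y ∈ Icc (0 : ℝ) 1) (hxx : x + x ≤ t) (hxy : x + y ≤ t) :
    ENNReal.ofReal (1 - p ^ 2) ≤ pSup2 ((1 - p) * x + p * y) t := by
  have hw : ![1 - p, p] ∈ stdSimplex ℝ (Fin 2) :=
    ⟨Fin.forall_fin_two.2 ⟨sub_nonneg.2 hp.2, hp.1⟩, by simp⟩
  have hatoms : ∀ i, ![x, y] i ∈ Icc (0 : ℝ) 1 := Fin.forall_fin_two.2 ⟨hx, hy⟩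
  refine (ENNReal.ofReal_le_ofReal (le_of_eq ?_)).trans
    (ofReal_sum_le_pSup2 hw hatoms (by simp) (S := {(0, 0), (0, 1), (1, 0)}) ?_)
  · rw [Finset.sum_insert (by simp), Finset.sum_insert (by simp), Finset.sum_singleton]
    simp only [Matrix.cons_val]
    ring
  · simpa [add_comm y x] using ⟨hxx, hxy⟩

theorem ofReal_sq_le_pSup2 {p x y t : ℝ} (hp : p ∈ Icc (0 : ℝ) 1)
    (hx : x ∈ Icc (0 : ℝ) 1) (hy : y ∈ Icc (0 : ℝ) 1) (hxx : x + x ≤ t) :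
    ENNReal.ofReal (p ^ 2) ≤ pSup2 (p * x + (1 - p) * y) t := by
  have hw : ![p, 1 - p] ∈ stdSimplex ℝ (Fin 2) :=
    ⟨Fin.forall_fin_two.2 ⟨hp.1, sub_nonneg.2 hp.2⟩, by simp⟩
  have hatoms : ∀ i, ![x, y] i ∈ Icc (0 : ℝ) 1 := Fin.forall_fin_two.2 ⟨hx, hy⟩
  simpa [sq] using
    ofReal_sum_le_pSup2 hw hatoms (by simp) (S := {(0, 0)}) (by simpa using hxx)

theorem ofReal_sq_div_one_sub_sq_le_pSup2 {m t : ℝ} (hm1 : m ≤ 1) (ht0 : 0 ≤ t) (ht1 : t < 1)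
    (hm : t ^ 2 ≤ m) : ENNReal.ofReal ((1 - m) ^ 2 / (1 - t ^ 2)) ≤ pSup2 m t := by
  have hpos : 0 < 1 - t ^ 2 := by nlinarith
  set k := (1 - m) / (1 - t ^ 2) with hk
  have hk0 : 0 ≤ k := div_nonneg (sub_nonneg.2 hm1) hpos.le
  have hk1 : k ≤ 1 := div_le_one_of_le₀ (by linarith) hpos.le
  have hkm : k * (1 - t ^ 2) = 1 - m := div_mul_cancel₀ _ hpos.ne'
  have hw : ![(1 - t) * k, t * k, 1 - k] ∈ stdSimplex ℝ (Fin 3) := by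
    refine ⟨Fin.forall_fin_succ.2 ⟨mul_nonneg (sub_nonneg.2 ht1.le) hk0,
      Fin.forall_fin_two.2 ⟨mul_nonneg ht0 hk0, sub_nonneg.2 hk1⟩⟩, ?_⟩
    simp only [Fin.sum_univ_three, Matrix.cons_val]
    ring
  have hatoms : ∀ i, ![0, t, 1] i ∈ Icc (0 : ℝ) 1 := Fin.forall_fin_succ.2
    ⟨unitInterval.zero_mem, Fin.forall_fin_two.2 ⟨⟨ht0, ht1.le⟩, unitInterval.one_mem⟩⟩
  have hmean : ∑ i, ![(1 - t) * k, t * k, 1 - k] i * ![0, t, 1] i = m := by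
    simp only [Fin.sum_univ_three, Matrix.cons_val]
    linear_combination -hkm
  refine (ENNReal.ofReal_le_ofReal (le_of_eq ?_)).trans
    (ofReal_sum_le_pSup2 hw hatoms hmean (S := {(0, 0), (0, 1), (1, 0)}) ?_)
  · have hval : (1 - m) ^ 2 / (1 - t ^ 2) = k * (1 - m) := by rw [hk]; ring
    rw [hval, ← hkm, Finset.sum_insert (by simp), Finset.sum_insert (by simp),
      Finset.sum_singleton]
    simp only [Matrix.cons_val]
    ring
  · simpa using ht0

theorem ofReal_qVal_le_pSup2 {m t : ℝ} (hm1 : m ≤ 1) (ht0 : 0 ≤ t) (htm : t < 2 * m) :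
    ENNReal.ofReal (qVal m t) ≤ pSup2 m t := by
  unfold qVal
  split_ifs with h₁ h₂ h₃
  · obtain ⟨h45, ht1, -, hmt⟩ := h₁
    have ht : 0 < t := by linarith
    have hp : m / t ∈ Icc (0 : ℝ) 1 :=
      ⟨div_nonneg (by linarith) ht0, div_le_one_of_le₀ (by nlinarith) ht0⟩
    have hmean : (1 - m / t) * 0 + m / t * t = m := by field_simp; ring
    simpa only [hmean] using ofReal_one_sub_sq_le_pSup2 hp unitInterval.zero_mem ⟨ht0, ht1⟩
      ((add_zero _).trans_le ht0) (zero_add t).le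
  · exact ofReal_sq_div_one_sub_sq_le_pSup2 hm1 ht0 h₂.2.1 h₂.2.2.le
  · obtain ⟨ht1, ht2, -⟩ := h₃
    have hw : 0 < 2 - t := sub_pos.2 ht2
    have hp : (m + 1 - t) / (2 - t) ∈ Icc (0 : ℝ) 1 :=
      ⟨div_nonneg (by linarith) hw.le, div_le_one_of_le₀ (by linarith) hw.le⟩
    have hmean : (1 - (m + 1 - t) / (2 - t)) * (t - 1) + (m + 1 - t) / (2 - t) * 1 = m := by
      field_simp; ring
    simpa only [hmean] using ofReal_one_sub_sq_le_pSup2 (x := t - 1) (t := t) hp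
      ⟨sub_nonneg.2 ht1, by linarith⟩ unitInterval.one_mem (by linarith) (by linarith)
  · have hw : 0 < 1 - t / 2 := by linarith
    have hp : (1 - m) / (1 - t / 2) ∈ Icc (0 : ℝ) 1 :=
      ⟨div_nonneg (by linarith) hw.le, div_le_one_of_le₀ (by linarith) hw.le⟩
    have hmean : (1 - m) / (1 - t / 2) * (t / 2) + (1 - (1 - m) / (1 - t / 2)) * 1 = m := by
      have hw' : 2 - t ≠ 0 := by linarith
      field_simp; ring
    simpa only [hmean] using ofReal_sq_le_pSup2 (x := t / 2) (t := t) hp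
      ⟨by linarith, by linarith⟩ unitInterval.one_mem (by linarith)

/-- The complete solution of the `n = 2` problem: every probability measure on `[0,1]`
with mean `m` satisfies `P(X₁ + X₂ ≤ t) ≤ q(m,t)`, and `p(m,t) = q(m,t)`. -/
theorem stmt_19 (m t : ℝ) (hm0 : 0 < m) (hm1 : m < 1) (ht0 : 0 ≤ t) (ht : t < 2 * m) :
    (∀ μ : Measure ℝ, IsProbabilityMeasure μ → μ (Set.Icc (0:ℝ) 1)ᶜ = 0 →
      (∫ x, x ∂μ) = m →
      (μ.prod μ) {p : ℝ × ℝ | p.1 + p.2 ≤ t} ≤ ENNReal.ofReal (qVal m t)) ∧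
    pSup2 m t = ENNReal.ofReal (qVal m t) := by
  have hupper (μ : Measure ℝ) (_ : IsProbabilityMeasure μ) (hμ : μ (Icc (0 : ℝ) 1)ᶜ = 0)
      (hmean : ∫ x, x ∂μ = m) :
      (μ.prod μ) {p : ℝ × ℝ | p.1 + p.2 ≤ t} ≤ ENNReal.ofReal (qVal m t) := by
    rw [← ofReal_measureReal]
    exact ENNReal.ofReal_le_ofReal
      (measureReal_prod_add_le_le_qVal (mem_ae_iff.2 hμ) hmean hm1 ht0 ht.le)
  exact ⟨hupper, le_antisymm (iSup₂_le fun μ hμ ↦ hupper μ hμ.1 hμ.2.1 hμ.2.2)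
    (ofReal_qVal_le_pSup2 hm1.le ht0 ht)⟩
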